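/- There exists a widely digitally delicate prime in base 6; that is, there exists a prime p such that for every natural number i and every digit d ∈ {0, 1, ..., 5} with d ≠ digit_i(p), where digit_i(p) denotes the i-th base-6 digit of p (counting from the least significant digit, i = 0, with digit_i(p) = 0 for all i at or beyond the number of base-6 digits of p, i.e., leading zeros), the number p + (d − digit_i(p))·6^i obtained by replacing the i-th base-6 digit of p (including leading zeros) with d is not prime. -/

import Mathlib

/-- The i-th base-6 digit (from the least significant, starting at i = 0) of n;
for i at or beyond the number of base-6 digits of n this is 0 (a leading zero). -/
def digit (n i : ℕ) : ℕ := n / 6 ^ i % 6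

/-!
The witness is a Proth prime `p = h * 2 ^ 716 + 1` with 553 base-6 digits. There is a product
`Q < p` of primes dividing `6 ^ 1440 - 1` such that, for every digit `d ∈ {1, ..., 5}` and every
`i`, some prime factor of `Q` divides `p + d * 6 ^ i`: divisibility depends only on `i` modulo
`1440`, so this is a finite check, and it disposes of all leading zeros at once. Each of the
`5 * 553` replacements of an actual digit of `p` has a small factor or fails Fermat's test to
base `2`. The Chinese remainder theorem allows `p ≡ 1 [MOD 2 ^ 716]` alongside the congruences
modulo `Q`, and since `2 ^ 716 > √p`, Proth's theorem applies to `p`.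
-/

theorem pow_modEq_pow_mod_of_pow_modEq_one {b L Q : ℕ} (hper : b ^ L ≡ 1 [MOD Q]) (i : ℕ) :
    b ^ i ≡ b ^ (i % L) [MOD Q] := by
  rw [← ZMod.natCast_eq_natCast_iff] at hper ⊢
  push_cast at hper ⊢
  exact pow_eq_pow_mod i hper

theorem not_prime_add_mul_pow_of_forall_lt_period {b d L m Q : ℕ} (hL : 0 < L) (hQ : 0 < Q)
    (hQm : Q < m) (hper : b ^ L ≡ 1 [MOD Q])
    (hcover : ∀ r < L, 1 < (m + d * b ^ r).gcd Q) (i : ℕ) : ¬ (m + d * b ^ i).Prime := by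
  have hmod : m + d * b ^ i ≡ m + d * b ^ (i % L) [MOD Q] :=
    ((pow_modEq_pow_mod_of_pow_modEq_one hper i).mul_left d).add_left m
  have hgcd : 1 < (m + d * b ^ i).gcd Q := hmod.gcd_eq ▸ hcover _ (Nat.mod_lt i hL)
  have hlt : (m + d * b ^ i).gcd Q < m + d * b ^ i :=
    ((Nat.gcd_le_right _ hQ).trans_lt hQm).trans_le (Nat.le_add_right ..)
  exact Nat.not_prime_of_dvd_of_lt (Nat.gcd_dvd_left ..) hgcd hlt

theorem two_pow_succ_dvd_sub_one_of_pow_eq_neg_one {q k : ℕ} [Fact q.Prime] (hq : q ≠ 2)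
    {x : ZMod q} (hx : x ^ 2 ^ k = -1) : 2 ^ (k + 1) ∣ q - 1 := by
  have : Fact (2 < q) := ⟨(Fact.out : q.Prime).two_le.lt_of_ne' hq⟩
  have hx0 : x ≠ 0 := by
    rintro rfl
    simp at hx
  have hord : orderOf x = 2 ^ (k + 1) := by
    apply orderOf_eq_prime_pow
    · rw [hx]
      exact ZMod.neg_one_ne_one
    · rw [pow_succ, pow_mul, hx, neg_one_sq]
  exact hord ▸ ZMod.orderOf_dvd_card_sub_one hx0

theorem two_pow_succ_lt_of_prime_dvd_proth {a h k q : ℕ} (hq : q.Prime)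
    (hqn : q ∣ h * 2 ^ (k + 1) + 1) (ha : h * 2 ^ (k + 1) + 1 ∣ a ^ (h * 2 ^ k) + 1) :
    2 ^ (k + 1) < q := by
  have : Fact q.Prime := ⟨hq⟩
  have hq2 : q ≠ 2 := by
    rintro rfl
    have heven : 2 ∣ h * 2 ^ (k + 1) := dvd_mul_of_dvd_right (dvd_pow_self 2 k.succ_ne_zero) h
    omega
  have hroot : ((a : ZMod q) ^ h) ^ 2 ^ k = -1 := by
    rw [← pow_mul, eq_neg_iff_add_eq_zero]
    exact_mod_cast (ZMod.natCast_eq_zero_iff _ q).2 (hqn.trans ha)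
  have hle := Nat.le_of_dvd (Nat.sub_pos_of_lt hq.one_lt)
    (two_pow_succ_dvd_sub_one_of_pow_eq_neg_one hq2 hroot)
  have := hq.pos
  omega

theorem proth_primality {a h k : ℕ} (hpos : 0 < h) (hlt : h < 2 ^ (k + 1))
    (ha : h * 2 ^ (k + 1) + 1 ∣ a ^ (h * 2 ^ k) + 1) : (h * 2 ^ (k + 1) + 1).Prime := by
  have hone : h * 2 ^ (k + 1) + 1 ≠ 1 := (Nat.succ_lt_succ (by positivity)).ne'
  by_contra hprime
  have hsq := Nat.minFac_sq_le_self (Nat.succ_pos _) hprime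
  have hmin := two_pow_succ_lt_of_prime_dvd_proth (Nat.minFac_prime hone) (Nat.minFac_dvd _) ha
  have hle : h * 2 ^ (k + 1) + 1 ≤ (2 ^ (k + 1)) ^ 2 := by nlinarith
  exact (hsq.trans hle).not_gt (Nat.pow_lt_pow_left hmin two_ne_zero)

theorem not_prime_of_pow_self_mod_ne {a n : ℕ} (h : a ^ n % n ≠ a % n) : ¬ n.Prime := by
  intro hn
  have : Fact n.Prime := ⟨hn⟩
  refine h ((ZMod.natCast_eq_natCast_iff' _ _ n).1 ?_)
  rw [Nat.cast_pow, ZMod.pow_card]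

/-- `b ^ e % n`, by sixteenth powers along the last `k` hexadecimal digits of `e`, so that no large
intermediate power is computed once `16 ^ k` exceeds `e`. -/
def powMod (b n : ℕ) : ℕ → ℕ → ℕ
  | 0, e => b ^ e % n
  | k + 1, e => powMod b n k (e / 16) ^ 16 * b ^ (e % 16) % n

theorem powMod_eq_pow_mod (b n k e : ℕ) : powMod b n k e = b ^ e % n := by
  induction k generalizing e with
  | zero => rfl
  | succ k ih =>
    rw [powMod, ih, Nat.mul_mod, ← Nat.pow_mod, ← Nat.mul_mod, ← pow_mul, ← pow_add,
      mul_comm, Nat.div_add_mod]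

/-- A compositeness test for `n`: either `n` has a proper common factor with the sieving modulus
`M`, or `a ^ n % n ≠ a % n`. The number `k` of hexadecimal digits only affects efficiency. -/
def isCertifiedComposite (M a k n : ℕ) : Bool :=
  (1 < n.gcd M && n.gcd M < n) || powMod a n k n != a % n

theorem not_prime_of_isCertifiedComposite {M a k n : ℕ} (h : isCertifiedComposite M a k n) :
    ¬ n.Prime := by
  simp only [isCertifiedComposite, powMod_eq_pow_mod, Bool.or_eq_true, Bool.and_eq_true,
    decide_eq_true_eq, bne_iff_ne] at h
  obtain ⟨hgt, hlt⟩ | hfermat := h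
  · exact Nat.not_prime_of_dvd_of_lt (Nat.gcd_dvd_left n M) hgt hlt
  · exact not_prime_of_pow_self_mod_ne hfermat

/-- The result of replacing the `i`-th base-6 digit of `n` by `d`. The subtraction does not
truncate, since `digit n i * 6 ^ i ≤ n`. -/
def replaceDigit (n i d : ℕ) : ℕ := n - digit n i * 6 ^ i + d * 6 ^ i

theorem digit_eq_zero_of_lt {n i : ℕ} (h : n < 6 ^ i) : digit n i = 0 := by
  rw [digit, Nat.div_eq_of_lt h]

theorem replaceDigit_of_lt {n i : ℕ} (h : n < 6 ^ i) (d : ℕ) :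
    replaceDigit n i d = n + d * 6 ^ i := by
  rw [replaceDigit, digit_eq_zero_of_lt h, zero_mul, Nat.sub_zero]

/-- Primes `q` dividing `6 ^ 1440 - 1` for which the sets of pairs `(d, i)` with
`q ∣ delicatePrime + d * 6 ^ i` cover `{1, ..., 5} × ℕ`. -/
def coveringPrimes : List ℕ :=
  [5, 7, 11, 13, 17, 19, 31, 37, 41, 43, 61, 73, 97, 101, 181, 193, 241, 311, 353, 541, 577, 1171,
    1201, 1297, 1697, 2161, 2467, 3313, 3541, 6781, 8641, 9001, 13441, 17761, 46441, 55117, 55201,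
    98801, 112771, 211501, 1678321, 1950271, 473896897, 688490113, 3696985841, 6931400449,
    19353635731, 68754507401, 121206120881, 2478750186961]

/-- The product of the covering primes, whose gcd with a number detects whether one of them divides
it. -/
def coveringModulus : ℕ := coveringPrimes.prod

/-- The factor `h` of `delicatePrime = h * 2 ^ 716 + 1`. The covering fixes its residue modulo
`coveringModulus`, and the multiple `13562441` comes from a search in that residue class. -/
def prothMultiplier : ℕ :=
  13562441 * coveringModulus +
    884500043658016863189538995656900625760155843215155648523264561628593938223374332104784070406947636182082154283094979220784013613813817888362101129813495946897432145740636858293446919898475958241377078612231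

/-- The witness, a prime with 553 digits in base 6. -/
def delicatePrime : ℕ := prothMultiplier * 2 ^ 716 + 1

theorem delicatePrime_dvd_three_pow_add_one :
    delicatePrime ∣ 3 ^ (prothMultiplier * 2 ^ 715) + 1 := by
  have hpow : (powMod 3 delicatePrime 358 (prothMultiplier * 2 ^ 715) + 1) % delicatePrime = 0 := by
    decide +kernel
  rw [powMod_eq_pow_mod, Nat.mod_add_mod] at hpow
  exact Nat.dvd_of_mod_eq_zero hpow

set_option exponentiation.threshold 716 in
theorem prime_delicatePrime : delicatePrime.Prime :=
  proth_primality (k := 715) (by decide +kernel) (by decide +kernel)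
    delicatePrime_dvd_three_pow_add_one

set_option exponentiation.threshold 553 in
theorem delicatePrime_lt_six_pow {i : ℕ} (hi : 553 ≤ i) : delicatePrime < 6 ^ i := by
  have hlt : delicatePrime < 6 ^ 553 := by decide +kernel
  exact hlt.trans_le (Nat.pow_le_pow_right (by norm_num) hi)

theorem coveringModulus_lt_delicatePrime : coveringModulus < delicatePrime := by decide +kernel

theorem six_pow_modEq_one_coveringModulus : 6 ^ 1440 ≡ 1 [MOD coveringModulus] := by
  decide +kernel

theorem one_lt_gcd_delicatePrime_add_mul_six_pow_coveringModulus :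
    ∀ r < 1440, ∀ d ∈ Finset.Icc 1 5, 1 < (delicatePrime + d * 6 ^ r).gcd coveringModulus := by
  decide +kernel

theorem not_prime_delicatePrime_add_mul_six_pow {d : ℕ} (hd : d ∈ Finset.Icc 1 5) (i : ℕ) :
    ¬ (delicatePrime + d * 6 ^ i).Prime :=
  not_prime_add_mul_pow_of_forall_lt_period (by norm_num) (by decide +kernel)
    coveringModulus_lt_delicatePrime six_pow_modEq_one_coveringModulus
    (fun r hr => one_lt_gcd_delicatePrime_add_mul_six_pow_coveringModulus r hr d hd) i

-- Every number tested here is less than `16 ^ 358`, and its greatest common divisor with `1000!`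
-- settles all but 464 of the `5 * 553` cases without a modular power.
theorem isCertifiedComposite_replaceDigit_delicatePrime :
    ∀ i < 553, ∀ d ≤ 5, d ≠ digit delicatePrime i →
      isCertifiedComposite (Nat.factorial 1000) 2 358 (replaceDigit delicatePrime i d) := by
  decide +kernel

/-- There exists a widely digitally delicate prime in base 6: a prime p such
that replacing any one of its base-6 digits, including any of its leading
zeros, by a different digit in {0, ..., 5} yields a number that is not prime. -/
theorem exists_widely_digitally_delicate_base_6 :
    ∃ p : ℕ, Nat.Prime p ∧
      ∀ i : ℕ, ∀ d : ℕ, d ≤ 5 → d ≠ digit p i →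
        ¬ Nat.Prime (p - digit p i * 6 ^ i + d * 6 ^ i) := by
  refine ⟨delicatePrime, prime_delicatePrime, fun i d hd hne => ?_⟩
  change ¬ (replaceDigit delicatePrime i d).Prime
  obtain hi | hi := lt_or_ge i 553
  · exact not_prime_of_isCertifiedComposite
      (isCertifiedComposite_replaceDigit_delicatePrime i hi d hd hne)
  · have hlt : delicatePrime < 6 ^ i := delicatePrime_lt_six_pow hi
    rw [digit_eq_zero_of_lt hlt] at hne
    rw [replaceDigit_of_lt hlt]
    exact not_prime_delicatePrime_add_mul_six_pow
      (Finset.mem_Icc.2 ⟨Nat.one_le_iff_ne_zero.2 hne, hd⟩) i
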